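/- arXiv:1804.10841 — 4 statements merged into one kernel-verified Lean document; each statement's English description precedes it below -/
import Mathlib

section
/- Let 0 < p < 1. There exists a constant C > 0 depending only on p such that for every continuously differentiable function g : ℝ → ℝ that is square-integrable, satisfies g(x) → 0 as x → ±∞, and has Q := ∫_ℝ (1+g'(x)²)^{(p-1)/2} g'(x)² dx < ∞, one has (sup_{x∈ℝ} |g(x)|)² ≤ C · Q^{1/2} · ‖g‖_{L²} + C · Q^{2/(3p+1)} · ‖g‖_{L²}^{4p/(3p+1)}. -/
open MeasureTheory Filter

/-!
Write `φ t = (1 + t²) ^ ((p - 1) / 2) * t`, so that the energy density is `φ |g'| * |g'|`.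
Since `φ` is nondecreasing on `[0, ∞)`, every threshold `e ≥ 0` satisfies
`φ e * |g'| ≤ φ e * e + φ |g'| * |g'|`: the energy controls the variation of `g` up to an error
proportional to length. If `m = |g x| > 0` and `I = ∫ g²`, then `|g| ≤ m / 2` somewhere within
distance `4 * I / m²` of `x`, so `g` varies by at least `m / 2` there. The threshold
`e = m³ / (16 * I)` makes the error a quarter of `φ e * m`, whence `φ e * m ≤ 4 * Q`.
Because `φ e` is at least half of `e` or of `e ^ p`, solving for `m` gives one of the two terms
of the inequality.
-/

section MonotoneStress

variable {E : Type*} [NormedAddCommGroup E] {g : ℝ → E} {φ : ℝ → ℝ}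

lemma nonneg_of_monotoneOn_Ici (hφ : MonotoneOn φ (Set.Ici 0)) (hφ0 : 0 ≤ φ 0) {t : ℝ}
    (ht : 0 ≤ t) : 0 ≤ φ t :=
  hφ0.trans (hφ Set.self_mem_Ici ht ht)

lemma mul_sub_le_mul_self_of_monotoneOn (hφ : MonotoneOn φ (Set.Ici 0)) (hφ0 : 0 ≤ φ 0)
    {e t : ℝ} (he : 0 ≤ e) (ht : 0 ≤ t) : φ e * (t - e) ≤ φ t * t := by
  have hφe := nonneg_of_monotoneOn_Ici hφ hφ0 he
  have hφt := nonneg_of_monotoneOn_Ici hφ hφ0 ht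
  rcases le_total t e with hte | het
  · exact (mul_nonpos_of_nonneg_of_nonpos hφe (sub_nonpos.2 hte)).trans (mul_nonneg hφt ht)
  · exact mul_le_mul (hφ he ht het) (sub_le_self t he) (sub_nonneg.2 het) hφt

lemma exists_mem_Ioc_mul_le_integral {f : ℝ → ℝ} (hf : Integrable f) (hf0 : 0 ≤ f) (x : ℝ)
    {L : ℝ} (hL : 0 < L) : ∃ y ∈ Set.Ioc x (x + L), L * f y ≤ ∫ z, f z := by
  obtain ⟨y, hy, hfy⟩ := exists_le_setAverage (μ := volume) (s := Set.Ioc x (x + L))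
    (by simpa using hL) (by simp) hf.integrableOn
  refine ⟨y, hy, ?_⟩
  calc L * f y ≤ L * ⨍ z in Set.Ioc x (x + L), f z := by gcongr
    _ = ∫ z in Set.Ioc x (x + L), f z := by
      simp [setAverage_eq, hL.le, hL.ne']
    _ ≤ ∫ z, f z := setIntegral_le_integral hf (.of_forall hf0)

lemma integral_norm_sq_pos (hg : Continuous g) (hg2 : Integrable fun z ↦ ‖g z‖ ^ 2) {x : ℝ}
    (hx : g x ≠ 0) : 0 < ∫ z, ‖g z‖ ^ 2 :=
  integral_pos_of_integrable_nonneg_nonzero (hg.norm.pow 2) hg2 (fun _ ↦ by positivity)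
    (pow_ne_zero 2 (norm_ne_zero_iff.2 hx))

variable [NormedSpace ℝ E] [CompleteSpace E]

lemma intervalIntegrable_deriv_of_integrable_stress (hφ : MonotoneOn φ (Set.Ici 0))
    (hφ0 : 0 ≤ φ 0) (hQ : Integrable fun z ↦ φ ‖deriv g z‖ * ‖deriv g z‖) {e : ℝ}
    (he : 0 ≤ e) (hφe : 0 < φ e) (a b : ℝ) : IntervalIntegrable (deriv g) volume a b := by
  have hdom : IntervalIntegrable (fun z ↦ e + φ ‖deriv g z‖ * ‖deriv g z‖ / φ e) volume a b :=
    intervalIntegrable_const.add (hQ.div_const (φ e)).intervalIntegrable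
  refine hdom.mono_fun' (aestronglyMeasurable_deriv g _) (.of_forall fun z ↦ ?_)
  have h := mul_sub_le_mul_self_of_monotoneOn hφ hφ0 he (norm_nonneg (deriv g z))
  rw [mul_comm, ← le_div_iff₀ hφe] at h
  exact sub_le_iff_le_add'.1 h

lemma mul_norm_sub_le_add_integral_stress (hφ : MonotoneOn φ (Set.Ici 0)) (hφ0 : 0 ≤ φ 0)
    (hg : Differentiable ℝ g) (hQ : Integrable fun z ↦ φ ‖deriv g z‖ * ‖deriv g z‖)
    {e : ℝ} (he : 0 ≤ e) {a b : ℝ} (hab : a ≤ b) :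
    φ e * ‖g b - g a‖ ≤ φ e * (e * (b - a)) + ∫ z, φ ‖deriv g z‖ * ‖deriv g z‖ := by
  have hW (z : ℝ) : 0 ≤ φ ‖deriv g z‖ * ‖deriv g z‖ :=
    mul_nonneg (nonneg_of_monotoneOn_Ici hφ hφ0 (norm_nonneg _)) (norm_nonneg _)
  rcases (nonneg_of_monotoneOn_Ici hφ hφ0 he).eq_or_lt with hφe | hφe
  · simpa [← hφe] using integral_nonneg hW
  have hg' := intervalIntegrable_deriv_of_integrable_stress hφ hφ0 hQ he hφe a b
  have hvar : ‖g b - g a‖ ≤ ∫ z in a..b, ‖deriv g z‖ := by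
    rw [← intervalIntegral.integral_deriv_eq_sub (fun z _ ↦ hg z) hg']
    exact intervalIntegral.norm_integral_le_integral_norm hab
  calc φ e * ‖g b - g a‖ ≤ ∫ z in a..b, φ e * ‖deriv g z‖ := by
        rw [intervalIntegral.integral_const_mul]
        gcongr
    _ ≤ ∫ z in a..b, (φ e * e + φ ‖deriv g z‖ * ‖deriv g z‖) := by
        refine intervalIntegral.integral_mono_on hab (hg'.norm.const_mul _)
          (intervalIntegrable_const.add hQ.intervalIntegrable) fun z _ ↦ ?_
        linarith [mul_sub_le_mul_self_of_monotoneOn hφ hφ0 he (norm_nonneg (deriv g z))]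
    _ = φ e * (e * (b - a)) + ∫ z in a..b, φ ‖deriv g z‖ * ‖deriv g z‖ := by
        rw [intervalIntegral.integral_add intervalIntegrable_const hQ.intervalIntegrable,
          intervalIntegral.integral_const, smul_eq_mul]
        ring
    _ ≤ φ e * (e * (b - a)) + ∫ z, φ ‖deriv g z‖ * ‖deriv g z‖ := by
        rw [intervalIntegral.integral_of_le hab]
        exact add_le_add_right (setIntegral_le_integral hQ (.of_forall hW)) _

lemma stress_mul_norm_le_integral (hφ : MonotoneOn φ (Set.Ici 0)) (hφ0 : 0 ≤ φ 0)
    (hg : Differentiable ℝ g) (hg2 : Integrable fun z ↦ ‖g z‖ ^ 2)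
    (hQ : Integrable fun z ↦ φ ‖deriv g z‖ * ‖deriv g z‖) {x : ℝ} (hx : g x ≠ 0) :
    φ (‖g x‖ ^ 3 / (16 * ∫ z, ‖g z‖ ^ 2)) * ‖g x‖
      ≤ 4 * ∫ z, φ ‖deriv g z‖ * ‖deriv g z‖ := by
  have hI := integral_norm_sq_pos hg.continuous hg2 hx
  have : 0 < ‖g x‖ := norm_pos_iff.2 hx
  set I := ∫ z, ‖g z‖ ^ 2
  set e := ‖g x‖ ^ 3 / (16 * I) with he_def
  have he : 0 ≤ e := by positivity
  have hL : 0 < 4 * I / ‖g x‖ ^ 2 := by positivity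
  obtain ⟨y, ⟨hxy, hyL⟩, hy⟩ :=
    exists_mem_Ioc_mul_le_integral hg2 (fun _ ↦ by positivity) x hL
  have hhalf : ‖g y‖ ≤ ‖g x‖ / 2 := by
    rw [div_mul_eq_mul_div, div_le_iff₀ (by positivity)] at hy
    refine le_of_sq_le_sq ?_ (by positivity)
    nlinarith
  have hjump : ‖g x‖ / 2 ≤ ‖g y - g x‖ := by
    linarith [norm_sub_norm_le (g x) (g y), norm_sub_rev (g x) (g y)]
  have herr : e * (y - x) ≤ ‖g x‖ / 4 := by
    calc e * (y - x) ≤ e * (4 * I / ‖g x‖ ^ 2) := by gcongr; linarith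
      _ = ‖g x‖ / 4 := by rw [he_def]; field_simp; norm_num
  have hφe := nonneg_of_monotoneOn_Ici hφ hφ0 he
  have hvar := mul_norm_sub_le_add_integral_stress hφ hφ0 hg hQ he hxy.le
  linarith [mul_le_mul_of_nonneg_left hjump hφe, mul_le_mul_of_nonneg_left herr hφe]

end MonotoneStress

/-- The scalar shear stress of a Carreau fluid of index `p` at shear rate `t`, that is, the
viscosity `(1 + t²) ^ ((p - 1) / 2)` times `t`. The energy density is this stress times `t`. -/
noncomputable def carreauStress (p t : ℝ) : ℝ := (1 + t ^ 2) ^ ((p - 1) / 2) * t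

lemma carreauStress_eq_rpow_mul_sin_arctan (p t : ℝ) :
    carreauStress p t = (1 + t ^ 2) ^ (p / 2) * Real.sin (Real.arctan t) := by
  rw [carreauStress, Real.sin_arctan, sub_div, Real.rpow_sub (by positivity), Real.sqrt_eq_rpow]
  ring

lemma monotoneOn_carreauStress {p : ℝ} (hp : 0 ≤ p) :
    MonotoneOn (carreauStress p) (Set.Ici 0) := by
  intro s (hs : 0 ≤ s) t _ hst
  rw [carreauStress_eq_rpow_mul_sin_arctan, carreauStress_eq_rpow_mul_sin_arctan]
  have hsin := Real.sin_arctan_strictMono.monotone hst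
  have := Real.sin_arctan_nonneg.2 hs
  gcongr

lemma min_self_rpow_le_two_mul_carreauStress {p t : ℝ} (hp : 0 ≤ p) (ht : 0 ≤ t) :
    min t (t ^ p) ≤ 2 * carreauStress p t := by
  rw [carreauStress_eq_rpow_mul_sin_arctan, Real.sin_arctan]
  have hsqrt : √(1 + t ^ 2) ≤ 1 + t := Real.sqrt_le_iff.2 ⟨by positivity, by nlinarith⟩
  have hpos : 0 < √(1 + t ^ 2) := by positivity
  rcases le_total t 1 with h1 | h1
  · have hone : 1 ≤ (1 + t ^ 2) ^ (p / 2) :=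
      Real.one_le_rpow (by nlinarith) (by positivity)
    have hsin : t / 2 ≤ t / √(1 + t ^ 2) := by gcongr; linarith
    exact (min_le_left _ _).trans (by nlinarith)
  · have hrpow : t ^ p ≤ (1 + t ^ 2) ^ (p / 2) := by
      calc t ^ p = (t ^ 2) ^ (p / 2) := by
            rw [← Real.rpow_natCast_mul ht, Nat.cast_ofNat, mul_div_cancel₀ _ two_ne_zero]
        _ ≤ (1 + t ^ 2) ^ (p / 2) := by gcongr; linarith
    have hsin : 1 / 2 ≤ t / √(1 + t ^ 2) := by
      rw [div_le_div_iff₀ two_pos hpos]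
      linarith
    have hmul := mul_le_mul hrpow hsin (by norm_num) (by positivity)
    exact (min_le_right _ _).trans (by linarith)

lemma sq_le_of_rpow_mul_le {m I Q r : ℝ} (hm : 0 ≤ m) (hI : 0 < I) (hr : 0 ≤ r)
    (h : (m ^ 3 / (16 * I)) ^ r * m ≤ 8 * Q) :
    m ^ 2 ≤ 64 * Q ^ (2 / (3 * r + 1)) * (I ^ ((1 : ℝ) / 2)) ^ (4 * r / (3 * r + 1)) := by
  have hd : 0 < 3 * r + 1 := by positivity
  have hQ : 0 ≤ Q := by
    have : 0 ≤ (m ^ 3 / (16 * I)) ^ r * m := by positivity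
    linarith
  have hconst : (16 : ℝ) ^ r * 8 ≤ 8 ^ (3 * r + 1) := by
    rw [Real.rpow_add_one (by norm_num), Real.rpow_mul (by norm_num)]
    gcongr
    norm_num
  have hpow : m ^ (3 * r + 1) ≤ 8 ^ (3 * r + 1) * Q * I ^ r := by
    calc m ^ (3 * r + 1) = (16 * I) ^ r * ((m ^ 3 / (16 * I)) ^ r * m) := by
          rw [Real.rpow_add_one' hm hd.ne', ← mul_assoc, ← Real.mul_rpow (by positivity)
            (by positivity), mul_div_cancel₀ _ (by positivity), ← Real.rpow_natCast_mul hm,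
            Nat.cast_ofNat]
      _ ≤ (16 * I) ^ r * (8 * Q) := by gcongr
      _ = 16 ^ r * 8 * Q * I ^ r := by rw [Real.mul_rpow (by norm_num) hI.le]; ring
      _ ≤ 8 ^ (3 * r + 1) * Q * I ^ r := by gcongr
  have hcancel {u : ℝ} (hu : 0 ≤ u) : (u ^ (3 * r + 1)) ^ (2 / (3 * r + 1)) = u ^ 2 := by
    rw [← Real.rpow_mul hu, mul_div_cancel₀ _ hd.ne', Real.rpow_two]
  calc m ^ 2 = (m ^ (3 * r + 1)) ^ (2 / (3 * r + 1)) := (hcancel hm).symm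
    _ ≤ (8 ^ (3 * r + 1) * Q * I ^ r) ^ (2 / (3 * r + 1)) := by gcongr
    _ = 64 * Q ^ (2 / (3 * r + 1)) * (I ^ ((1 : ℝ) / 2)) ^ (4 * r / (3 * r + 1)) := by
      rw [Real.mul_rpow (by positivity) (by positivity), Real.mul_rpow (by positivity) hQ,
        hcancel (by norm_num), ← Real.rpow_mul hI.le, ← Real.rpow_mul hI.le]
      ring_nf

/-- Pointwise rather than with `⨆ x, ‖g x‖`, which would be `0` for an unbounded `g`. -/
theorem sobolev_type_inequality_general {E : Type*} [NormedAddCommGroup E] [NormedSpace ℝ E]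
    [CompleteSpace E] {p : ℝ} (hp : 0 ≤ p) {g : ℝ → E} (hg : Differentiable ℝ g)
    (hg2 : Integrable fun x ↦ ‖g x‖ ^ 2)
    (hQ : Integrable fun x ↦ (1 + ‖deriv g x‖ ^ 2) ^ ((p - 1) / 2) * ‖deriv g x‖ ^ 2) (x : ℝ) :
    ‖g x‖ ^ 2 ≤
      64 * (∫ x, (1 + ‖deriv g x‖ ^ 2) ^ ((p - 1) / 2) * ‖deriv g x‖ ^ 2) ^ ((1 : ℝ) / 2)
          * (∫ x, ‖g x‖ ^ 2) ^ ((1 : ℝ) / 2)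
      + 64 * (∫ x, (1 + ‖deriv g x‖ ^ 2) ^ ((p - 1) / 2) * ‖deriv g x‖ ^ 2) ^ (2 / (3 * p + 1))
          * ((∫ x, ‖g x‖ ^ 2) ^ ((1 : ℝ) / 2)) ^ (4 * p / (3 * p + 1)) := by
  rcases eq_or_ne (g x) 0 with hx | hx
  · rw [hx, norm_zero, zero_pow two_ne_zero]
    positivity
  have hI := integral_norm_sq_pos hg.continuous hg2 hx
  have hstress (t : ℝ) : (1 + t ^ 2) ^ ((p - 1) / 2) * t ^ 2 = carreauStress p t * t := by
    rw [carreauStress, mul_assoc, sq t]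
  simp only [hstress] at hQ ⊢
  have hkey := stress_mul_norm_le_integral (monotoneOn_carreauStress hp)
    (by simp [carreauStress]) hg hg2 hQ hx
  set Q := ∫ z, carreauStress p ‖deriv g z‖ * ‖deriv g z‖
  set I := ∫ z, ‖g z‖ ^ 2
  set e := ‖g x‖ ^ 3 / (16 * I)
  have hmin : min e (e ^ p) ≤ 2 * carreauStress p e :=
    min_self_rpow_le_two_mul_carreauStress hp (by positivity)
  have hbound {r : ℝ} (hr : 0 ≤ r) (h : e ^ r ≤ 2 * carreauStress p e) :
      ‖g x‖ ^ 2 ≤ 64 * Q ^ (2 / (3 * r + 1)) * (I ^ ((1 : ℝ) / 2)) ^ (4 * r / (3 * r + 1)) :=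
    sq_le_of_rpow_mul_le (norm_nonneg _) hI hr <| by
      linarith [mul_le_mul_of_nonneg_right h (norm_nonneg (g x))]
  have hQ0 : 0 ≤ Q := integral_nonneg fun z ↦ by rw [Pi.zero_apply, ← hstress]; positivity
  rcases min_le_iff.1 hmin with h | h
  · have h1 := hbound zero_le_one (by rwa [Real.rpow_one])
    rw [show (2 : ℝ) / (3 * 1 + 1) = 1 / 2 by norm_num,
      show (4 : ℝ) * 1 / (3 * 1 + 1) = 1 by norm_num, Real.rpow_one] at h1
    exact h1.trans (le_add_of_nonneg_right (by positivity))
  · exact (hbound hp h).trans (le_add_of_nonneg_left (by positivity))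

/-- Sobolev-type inequality (Lemma 4.2): for `0 < p < 1` there is `C > 0` depending only
on `p` such that for every `C¹`, square-integrable `g : ℝ → ℝ` vanishing at `±∞` with
finite weighted Dirichlet energy `Q = ∫ (1+g'²)^((p-1)/2) g'²`, one has
`(sup |g|)² ≤ C Q^(1/2) ‖g‖_{L²} + C Q^(2/(3p+1)) ‖g‖_{L²}^(4p/(3p+1))`. -/
theorem sobolev_type_inequality (p : ℝ) (hp0 : 0 < p) (hp1 : p < 1) :
    ∃ C : ℝ, 0 < C ∧
      ∀ g : ℝ → ℝ, ContDiff ℝ 1 g →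
        Integrable (fun x => (g x) ^ 2) →
        Tendsto g atTop (nhds 0) → Tendsto g atBot (nhds 0) →
        Integrable (fun x => (1 + (deriv g x) ^ 2) ^ ((p - 1) / 2) * (deriv g x) ^ 2) →
        (⨆ x, |g x|) ^ 2 ≤
          C * (∫ x, (1 + (deriv g x) ^ 2) ^ ((p - 1) / 2) * (deriv g x) ^ 2) ^ ((1 : ℝ) / 2)
              * ((∫ x, (g x) ^ 2) ^ ((1 : ℝ) / 2))
          + C * (∫ x, (1 + (deriv g x) ^ 2) ^ ((p - 1) / 2) * (deriv g x) ^ 2) ^ (2 / (3 * p + 1))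
              * ((∫ x, (g x) ^ 2) ^ ((1 : ℝ) / 2)) ^ (4 * p / (3 * p + 1)) := by
  refine ⟨64, by norm_num, fun g hg hg2 _ _ hQ ↦ ?_⟩
  rw [Real.iSup_pow fun x ↦ abs_nonneg (g x)]
  exact ciSup_le fun x ↦ by
    simpa only [Real.norm_eq_abs, sq_abs] using sobolev_type_inequality_general hp0.le
      (hg.differentiable one_ne_zero) (by simpa using hg2) (by simpa using hQ) x
end

section
/- Let 0 < p < 1 and let v : ℝ → ℝ be continuously differentiable with v(x) → 0 as x → −∞. Then for every x ∈ ℝ, (1+v(x)²)^{(3p+1)/4} ≤ 1 + ((3p+1)/2) · ( ∫_ℝ (1+v(y)²)^{(p-1)/2} v(y)² dy )^{1/2} · ( ∫_ℝ (1+v(y)²)^{p-1} v'(y)² dy )^{1/2}. -/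
open MeasureTheory Filter

/-!
The function `F = (1 + ‖v‖²) ^ ((α + β) / 2 + 1)` has derivative
`(α + β + 2) * ⟪(1 + ‖v‖²) ^ (α / 2) • v, (1 + ‖v‖²) ^ (β / 2) • v'⟫`, so the Cauchy–Schwarz
inequality bounds the total variation of `F`, and hence its deviation from a limit value, by the
two weighted `L²` norms. The exponents `α = (p - 1) / 2` and `β = p - 1` give Kanel's estimate.
-/

section TotalVariation

variable {E : Type*} [NormedAddCommGroup E] [NormedSpace ℝ E] [CompleteSpace E] {f : ℝ → E}

theorem enorm_sub_le_lintegral_enorm_deriv {a b : ℝ}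
    (hf : ∀ y ∈ Set.uIcc a b, DifferentiableAt ℝ f y) :
    ‖f b - f a‖ₑ ≤ ∫⁻ y in Set.uIoc a b, ‖deriv f y‖ₑ := by
  by_cases hfin : ∫⁻ y in Set.uIoc a b, ‖deriv f y‖ₑ = ⊤
  · exact hfin ▸ le_top
  have hint : IntervalIntegrable (deriv f) volume a b :=
    intervalIntegrable_iff.2 ⟨aestronglyMeasurable_deriv f _, Ne.lt_top hfin⟩
  calc ‖f b - f a‖ₑ = ‖∫ y in a..b, deriv f y‖ₑ := by
        rw [intervalIntegral.integral_deriv_eq_sub hf hint]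
    _ = ‖∫ y in Set.uIoc a b, deriv f y‖ₑ := by
        rw [← ofReal_norm, intervalIntegral.norm_intervalIntegral_eq, ofReal_norm]
    _ ≤ ∫⁻ y in Set.uIoc a b, ‖deriv f y‖ₑ := enorm_integral_le_lintegral_enorm _

theorem enorm_sub_le_lintegral_enorm_deriv_of_tendsto (hf : Differentiable ℝ f)
    {l : Filter ℝ} [l.NeBot] {c : E} (hlim : Tendsto f l (nhds c)) (x : ℝ) :
    ‖f x - c‖ₑ ≤ ∫⁻ y, ‖deriv f y‖ₑ :=
  le_of_tendsto (hlim.const_sub (f x)).enorm <| Eventually.of_forall fun _ =>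
    (enorm_sub_le_lintegral_enorm_deriv fun y _ => hf y).trans (setLIntegral_le_lintegral _ _)

end TotalVariation

theorem lintegral_enorm_inner_le {X 𝕜 E : Type*} [MeasurableSpace X] {μ : Measure X} [RCLike 𝕜]
    [NormedAddCommGroup E] [InnerProductSpace 𝕜 E] {f g : X → E}
    (hf : AEStronglyMeasurable f μ) (hg : AEStronglyMeasurable g μ) :
    ∫⁻ y, ‖inner 𝕜 (f y) (g y)‖ₑ ∂μ ≤
      (∫⁻ y, ENNReal.ofReal (‖f y‖ ^ 2) ∂μ) ^ ((1 : ℝ) / 2) *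
        (∫⁻ y, ENNReal.ofReal (‖g y‖ ^ 2) ∂μ) ^ ((1 : ℝ) / 2) := by
  have enorm_rpow_two (u : E) : ‖u‖ₑ ^ (2 : ℝ) = ENNReal.ofReal (‖u‖ ^ 2) := by
    rw [ENNReal.rpow_two, ENNReal.ofReal_pow (norm_nonneg u), ofReal_norm]
  have enorm_inner_le (y : X) : ‖inner 𝕜 (f y) (g y)‖ₑ ≤ ‖f y‖ₑ * ‖g y‖ₑ :=
    ENNReal.coe_le_coe.2 (nnnorm_inner_le_nnnorm (f y) (g y)) |>.trans_eq (ENNReal.coe_mul _ _)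
  calc ∫⁻ y, ‖inner 𝕜 (f y) (g y)‖ₑ ∂μ ≤ ∫⁻ y, ‖f y‖ₑ * ‖g y‖ₑ ∂μ :=
        lintegral_mono enorm_inner_le
    _ ≤ _ := by
        simpa only [Pi.mul_apply, enorm_rpow_two] using
          ENNReal.lintegral_mul_le_Lp_mul_Lq μ Real.HolderConjugate.two_two hf.enorm hg.enorm

section JapaneseBracket

variable {E : Type*} [NormedAddCommGroup E]

theorem norm_one_add_norm_sq_rpow_half_smul_sq [NormedSpace ℝ E] (r : ℝ) (u w : E) :
    ‖(1 + ‖u‖ ^ 2) ^ (r / 2) • w‖ ^ 2 = (1 + ‖u‖ ^ 2) ^ r * ‖w‖ ^ 2 := by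
  have hpos : 0 ≤ 1 + ‖u‖ ^ 2 := by positivity
  rw [norm_smul, mul_pow, Real.norm_eq_abs, sq_abs, ← Real.rpow_mul_natCast hpos, Nat.cast_ofNat,
    div_mul_cancel₀ r two_ne_zero]

variable [InnerProductSpace ℝ E]

theorem hasDerivAt_one_add_norm_sq_rpow {v : ℝ → E} {v' : E} {y : ℝ} (hv : HasDerivAt v v' y)
    (α β : ℝ) :
    HasDerivAt (fun z => (1 + ‖v z‖ ^ 2) ^ ((α + β) / 2 + 1))
      ((α + β + 2) * inner ℝ ((1 + ‖v y‖ ^ 2) ^ (α / 2) • v y) ((1 + ‖v y‖ ^ 2) ^ (β / 2) • v'))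
      y := by
  have hpos : 0 < 1 + ‖v y‖ ^ 2 := by positivity
  refine ((hv.norm_sq.const_add 1).rpow_const (Or.inl hpos.ne')).congr_deriv ?_
  rw [real_inner_smul_left, real_inner_smul_right, add_sub_cancel_right, add_div,
    Real.rpow_add hpos]
  ring

theorem kanel_pointwise_estimate_general [CompleteSpace E] (α β : ℝ) {v : ℝ → E}
    (hv : Differentiable ℝ v) {l : Filter ℝ} [l.NeBot] {c : E} (hlim : Tendsto v l (nhds c))
    (x : ℝ) :
    ‖(1 + ‖v x‖ ^ 2) ^ ((α + β) / 2 + 1) - (1 + ‖c‖ ^ 2) ^ ((α + β) / 2 + 1)‖ₑ ≤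
      ‖α + β + 2‖ₑ *
        (∫⁻ y, ENNReal.ofReal ((1 + ‖v y‖ ^ 2) ^ α * ‖v y‖ ^ 2)) ^ ((1 : ℝ) / 2) *
        (∫⁻ y, ENNReal.ofReal ((1 + ‖v y‖ ^ 2) ^ β * ‖deriv v y‖ ^ 2)) ^ ((1 : ℝ) / 2) := by
  have hne (u : E) : 1 + ‖u‖ ^ 2 ≠ 0 := by positivity
  have hderiv (y : ℝ) := hasDerivAt_one_add_norm_sq_rpow (hv y).hasDerivAt α β
  have hlim_rpow : Tendsto (fun z => (1 + ‖v z‖ ^ 2) ^ ((α + β) / 2 + 1)) l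
      (nhds ((1 + ‖c‖ ^ 2) ^ ((α + β) / 2 + 1))) :=
    ((hlim.norm.pow 2).const_add 1).rpow_const (Or.inl (hne c))
  have hweight (r : ℝ) : AEStronglyMeasurable (fun y => (1 + ‖v y‖ ^ 2) ^ (r / 2)) volume :=
    (((hv.continuous.norm.pow 2).const_add 1).rpow_const
      fun y => Or.inl (hne (v y))).aestronglyMeasurable
  have hvariation := enorm_sub_le_lintegral_enorm_deriv_of_tendsto
    (fun y => (hderiv y).differentiableAt) hlim_rpow x
  simp only [(hderiv _).deriv, enorm_mul] at hvariation
  rw [lintegral_const_mul' _ _ enorm_ne_top] at hvariation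
  have hcauchySchwarz := lintegral_enorm_inner_le (𝕜 := ℝ)
    ((hweight α).smul hv.continuous.aestronglyMeasurable)
    ((hweight β).smul (aestronglyMeasurable_deriv v volume))
  simp only [Pi.smul_apply', norm_one_add_norm_sq_rpow_half_smul_sq] at hcauchySchwarz
  rw [mul_assoc]
  exact hvariation.trans (by gcongr)

end JapaneseBracket

/-- Kanel'-type pointwise estimate ((6.23)–(6.24) with `a = (3p+1)/2`): for `0 < p < 1`
and `v` a `C¹` function vanishing at `-∞`, for every `x`,
`(1+v(x)²)^((3p+1)/4) ≤ 1 + ((3p+1)/2) (∫ (1+v²)^((p-1)/2) v²)^(1/2) (∫ (1+v²)^(p-1) v'²)^(1/2)`,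
stated with (possibly infinite) lower Lebesgue integrals. -/
theorem kanel_pointwise_estimate (p : ℝ) (hp0 : 0 < p) (hp1 : p < 1)
    (v : ℝ → ℝ) (hv : ContDiff ℝ 1 v) (hlim : Tendsto v atBot (nhds 0)) (x : ℝ) :
    ENNReal.ofReal ((1 + (v x) ^ 2) ^ ((3 * p + 1) / 4)) ≤
      1 + ENNReal.ofReal ((3 * p + 1) / 2) *
        (∫⁻ y, ENNReal.ofReal ((1 + (v y) ^ 2) ^ ((p - 1) / 2) * (v y) ^ 2)) ^ ((1 : ℝ) / 2) *
        (∫⁻ y, ENNReal.ofReal ((1 + (v y) ^ 2) ^ (p - 1) * (deriv v y) ^ 2)) ^ ((1 : ℝ) / 2) := by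
  have hestimate := kanel_pointwise_estimate_general ((p - 1) / 2) (p - 1)
    (hv.differentiable one_ne_zero) hlim x
  rw [show ((p - 1) / 2 + (p - 1)) / 2 + 1 = (3 * p + 1) / 4 by ring,
    show (p - 1) / 2 + (p - 1) + 2 = (3 * p + 1) / 2 by ring,
    Real.enorm_of_nonneg (show 0 ≤ (3 * p + 1) / 2 by linarith)] at hestimate
  simp only [Real.norm_eq_abs, sq_abs, zero_pow two_ne_zero, add_zero, Real.one_rpow] at hestimate
  rw [← tsub_le_iff_left, ← ENNReal.ofReal_one, ← ENNReal.ofReal_sub _ zero_le_one]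
  exact (Real.ofReal_le_enorm _).trans hestimate
end

section
/- Let w₀ : ℝ → ℝ be infinitely differentiable with w₀'(x) > 0 for all x and with finite limits w₋ := lim_{x→−∞} w₀(x) and w₊ := lim_{x→+∞} w₀(x). For t ≥ 0 let Y(t,·) : ℝ → ℝ be the inverse of the bijection X_t(x₀) := x₀ + t·w₀(x₀), and define w(t,x) := w₀(Y(t,x)). Then w is continuous on [0,∞)×ℝ, continuously differentiable on (0,∞)×ℝ, w(0,x) = w₀(x) for all x, and ∂ₜw(t,x) + w(t,x)·∂ₓw(t,x) = 0 for all t > 0 and x ∈ ℝ. -/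
open Filter Set

/-!
If `u₀` is monotone, `⟪u₀ a - u₀ b, a - b⟫ ≥ 0`, then for `t ≥ 0` the characteristic map
`X_t = id + t • u₀` does not decrease distances, so its right inverse `Y t` is a two-sided inverse,
1-Lipschitz in `x` and jointly continuous in `(t, x)`. Moreover `D X_t = id + t • D u₀` is coercive,
so the implicit function theorem for `X_t y = x` turns this continuity into smoothness.
Finally `u₀ ∘ Y t` is constant along each characteristic `s ↦ X_s y`, whose velocity is the value
`u₀ y` carried by it; differentiating along this line is Burgers' equation.
-/

open scoped Topology NNReal RealInnerProductSpace

section Calculus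

theorem continuousOn_of_antilipschitzWith_of_rightInverse {T α β : Type*} [TopologicalSpace T]
    [PseudoMetricSpace α] [PseudoMetricSpace β] {Φ : T → α → β} {Y : T → β → α} {S : Set T}
    {K : ℝ≥0} (hΦ : ∀ a, ContinuousOn (Φ · a) S) (hK : ∀ t ∈ S, AntilipschitzWith K (Φ t))
    (hY : ∀ t ∈ S, Function.RightInverse (Y t) (Φ t)) :
    ContinuousOn (fun q : T × β ↦ Y q.1 q.2) (S ×ˢ univ) := by
  rintro ⟨t, x⟩ ⟨ht, -⟩
  have hΦ_fst : ContinuousOn (fun q : T × β ↦ Φ q.1 (Y t x)) (S ×ˢ univ) :=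
    (hΦ (Y t x)).comp continuousOn_fst fun _ hq ↦ hq.1
  have hdist : Tendsto (fun q : T × β ↦ K * dist q.2 (Φ q.1 (Y t x))) (𝓝[S ×ˢ univ] (t, x))
      (𝓝 0) := by
    have h := (continuousWithinAt_snd.dist (hΦ_fst (t, x) ⟨ht, mem_univ x⟩)).const_mul (K : ℝ)
    simpa only [hY t ht x, dist_self, mul_zero] using h
  refine tendsto_iff_dist_tendsto_zero.2 (squeeze_zero' (.of_forall fun _ ↦ dist_nonneg) ?_ hdist)
  filter_upwards [self_mem_nhdsWithin] with q hq
  simpa only [hY q.1 hq.1 q.2] using (hK q.1 hq.1).le_mul_dist (Y q.1 q.2) (Y t x)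

theorem contDiffAt_of_eventually_apply_eq {𝕜 P E F : Type*} [RCLike 𝕜]
    [NormedAddCommGroup P] [NormedSpace 𝕜 P] [CompleteSpace P]
    [NormedAddCommGroup E] [NormedSpace 𝕜 E] [CompleteSpace E]
    [NormedAddCommGroup F] [NormedSpace 𝕜 F] [CompleteSpace F]
    {n : WithTop ℕ∞} {f : P × E → F} {g : P → E} {p : P} (hf : ContDiffAt 𝕜 n f (p, g p))
    (hn : n ≠ 0) (hinv : (fderiv 𝕜 f (p, g p) ∘L .inr 𝕜 P E).IsInvertible)
    (hg : ContinuousAt g p) (hfg : ∀ᶠ q in 𝓝 p, f (q, g q) = f (p, g p)) :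
    ContDiffAt 𝕜 n g p := by
  refine (hf.contDiffAt_implicitFunction hn hinv).congr_of_eventuallyEq ?_
  have hgraph : Tendsto (fun q ↦ (q, g q)) (𝓝 p) (𝓝 (p, g p)) := continuousAt_id.prodMk hg
  filter_upwards [hgraph.eventually (hf.eventually_apply_eq_iff_implicitFunction hn hinv), hfg]
    with q hiff hq
  exact (hiff.1 hq).symm

theorem deriv_add_fderiv_apply_eq_zero_of_eventually_eq_const {E F : Type*}
    [NormedAddCommGroup E] [NormedSpace ℝ E] [NormedAddCommGroup F] [NormedSpace ℝ F]
    {w : ℝ → E → F} {t : ℝ} {x v : E} {c : F}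
    (hw : DifferentiableAt ℝ (fun q : ℝ × E ↦ w q.1 q.2) (t, x))
    (hc : ∀ᶠ s in 𝓝 t, w s (x + (s - t) • v) = c) :
    deriv (w · x) t + fderiv ℝ (w t) x v = 0 := by
  set D := fderiv ℝ (fun q : ℝ × E ↦ w q.1 q.2) (t, x)
  have hD : HasFDerivAt (fun q : ℝ × E ↦ w q.1 q.2) D (t, x) := hw.hasFDerivAt
  have htime : HasDerivAt (w · x) (D (1, 0)) t :=
    hD.comp_hasDerivAt (f := fun s ↦ (s, x)) t ((hasDerivAt_id t).prodMk (hasDerivAt_const t x))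
  have hspace : HasFDerivAt (w t) (D ∘L .inr ℝ ℝ E) x :=
    hD.comp (f := fun y ↦ (t, y)) x (hasFDerivAt_prodMk_right t x)
  have hline : HasDerivAt (fun s ↦ (s, x + (s - t) • v)) (1, v) t := by
    simpa using (hasDerivAt_id t).prodMk
      ((((hasDerivAt_id t).sub_const t).smul_const v).const_add x)
  have halong : HasDerivAt (fun s ↦ w s (x + (s - t) • v)) (D (1, v)) t :=
    HasFDerivAt.comp_hasDerivAt (l := fun q : ℝ × E ↦ w q.1 q.2)
      (f := fun s ↦ (s, x + (s - t) • v)) t (by simpa using hD) hline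
  calc
    deriv (w · x) t + fderiv ℝ (w t) x v = D (1, 0) + D (0, v) := by
      rw [htime.deriv, hspace.fderiv]; rfl
    _ = D (1, v) := by rw [← map_add]; simp
    _ = 0 := halong.unique ((hasDerivAt_const t c).congr_of_eventuallyEq hc)

end Calculus

section MonotoneOperator

/-- The characteristic map `X_t(y) = y + t u₀(y)` of Burgers' equation with initial datum `u₀`:
the position at time `t` of the particle that starts at `y` and keeps the velocity `u₀(y)`. -/
def burgersCharacteristic {E : Type*} [AddCommGroup E] [Module ℝ E] (u₀ : E → E) (t : ℝ)
    (y : E) : E :=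
  y + t • u₀ y

variable {E : Type*} [NormedAddCommGroup E] [InnerProductSpace ℝ E]

theorem norm_le_norm_add_of_inner_nonneg {v w : E} (h : 0 ≤ ⟪w, v⟫) : ‖v‖ ≤ ‖v + w‖ := by
  refine le_of_sq_le_sq ?_ (norm_nonneg _)
  rw [norm_add_sq_real, real_inner_comm]
  linarith [sq_nonneg ‖w‖]

theorem isInvertible_id_add_of_inner_nonneg [CompleteSpace E] {A : E →L[ℝ] E}
    (hA : ∀ v, 0 ≤ ⟪A v, v⟫) : (.id ℝ E + A).IsInvertible := by
  have hcoercive : ∀ v, ‖v‖ ^ 2 * (1 : ℝ≥0) ≤ ‖⟪(.id ℝ E + A) v, v⟫‖ := fun v ↦ calc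
    ‖v‖ ^ 2 * (1 : ℝ≥0) ≤ ‖v‖ ^ 2 + ⟪A v, v⟫ := by simpa using hA v
    _ = ⟪(.id ℝ E + A) v, v⟫ := by simp [inner_add_left]
    _ ≤ ‖⟪(.id ℝ E + A) v, v⟫‖ := le_abs_self _
  obtain ⟨e, he⟩ := ContinuousLinearMap.isUnit_of_forall_le_norm_inner_map _ one_pos hcoercive
  exact ⟨ContinuousLinearEquiv.unitsEquiv ℝ E e, he⟩

/-- Monotone operators in the sense of Minty; for `E = ℝ` these are the monotone functions. -/
def IsMonotoneOperator (u : E → E) : Prop :=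
  ∀ a b, 0 ≤ ⟪u a - u b, a - b⟫

namespace IsMonotoneOperator

theorem of_monotone {f : ℝ → ℝ} (hf : Monotone f) : IsMonotoneOperator f := fun a b ↦
  (monovary_id_iff.2 hf).sub_mul_sub_nonneg b a |>.trans_eq (mul_comm _ _)

variable {u₀ : E → E} {t : ℝ} {y : E}

theorem inner_fderiv_apply_self_nonneg (hu : IsMonotoneOperator u₀)
    (hd : DifferentiableAt ℝ u₀ y) (v : E) : 0 ≤ ⟪fderiv ℝ u₀ y v, v⟫ := by
  have hmono : Monotone fun s : ℝ ↦ ⟪u₀ (y + s • v), v⟫ := by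
    intro r s hrs
    rcases hrs.eq_or_lt with rfl | hlt
    · rfl
    · have h := hu (y + s • v) (y + r • v)
      rw [add_sub_add_left_eq_sub, ← sub_smul, real_inner_smul_right, inner_sub_left] at h
      exact sub_nonneg.1 (nonneg_of_mul_nonneg_right h (sub_pos.2 hlt))
  have hline : HasDerivAt (fun s : ℝ ↦ u₀ (y + s • v)) (fderiv ℝ u₀ y v) 0 :=
    hd.hasFDerivAt.hasLineDerivAt v
  have hderiv : deriv (fun s : ℝ ↦ ⟪u₀ (y + s • v), v⟫) 0 = ⟪fderiv ℝ u₀ y v, v⟫ := by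
    simpa using (hline.inner ℝ (hasDerivAt_const 0 v)).deriv
  exact hderiv ▸ hmono.deriv_nonneg

theorem antilipschitzWith_burgersCharacteristic (hu : IsMonotoneOperator u₀) (ht : 0 ≤ t) :
    AntilipschitzWith 1 (burgersCharacteristic u₀ t) := by
  refine .of_le_mul_dist fun a b ↦ ?_
  have hinner : 0 ≤ ⟪t • (u₀ a - u₀ b), a - b⟫ := by
    rw [real_inner_smul_left]
    exact mul_nonneg ht (hu a b)
  calc
    dist a b ≤ ‖(a - b) + t • (u₀ a - u₀ b)‖ := by
        rw [dist_eq_norm]; exact norm_le_norm_add_of_inner_nonneg hinner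
    _ = ‖burgersCharacteristic u₀ t a - burgersCharacteristic u₀ t b‖ := by
        simp only [burgersCharacteristic, smul_sub]; congr 1; abel
    _ = (1 : ℝ≥0) * dist (burgersCharacteristic u₀ t a) (burgersCharacteristic u₀ t b) := by
        rw [NNReal.coe_one, one_mul, dist_eq_norm]

theorem isInvertible_fderiv_burgersCharacteristic [CompleteSpace E] (hu : IsMonotoneOperator u₀)
    (hd : DifferentiableAt ℝ u₀ y) (ht : 0 ≤ t) :
    (fderiv ℝ (burgersCharacteristic u₀ t) y).IsInvertible := by
  have hfderiv : fderiv ℝ (burgersCharacteristic u₀ t) y = .id ℝ E + t • fderiv ℝ u₀ y :=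
    ((hasFDerivAt_id y).add (hd.hasFDerivAt.const_smul t)).fderiv
  rw [hfderiv]
  refine isInvertible_id_add_of_inner_nonneg fun v ↦ ?_
  rw [smul_apply, real_inner_smul_left]
  exact mul_nonneg ht (hu.inner_fderiv_apply_self_nonneg hd v)

theorem leftInverse_burgersCharacteristic (hu : IsMonotoneOperator u₀) (ht : 0 ≤ t) {Z : E → E}
    (hZ : Function.RightInverse Z (burgersCharacteristic u₀ t)) :
    Function.LeftInverse Z (burgersCharacteristic u₀ t) :=
  Function.LeftInverse.rightInverse_of_injective hZ
    (hu.antilipschitzWith_burgersCharacteristic ht).injective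

variable {Y : ℝ → E → E}

theorem continuousOn_rightInverse_burgersCharacteristic (hu : IsMonotoneOperator u₀)
    (hY : ∀ t, 0 ≤ t → Function.RightInverse (Y t) (burgersCharacteristic u₀ t)) :
    ContinuousOn (fun q : ℝ × E ↦ Y q.1 q.2) (Ici 0 ×ˢ univ) :=
  continuousOn_of_antilipschitzWith_of_rightInverse
    (fun a ↦ by unfold burgersCharacteristic; fun_prop)
    (fun _ ht ↦ hu.antilipschitzWith_burgersCharacteristic ht) hY

theorem contDiffOn_rightInverse_burgersCharacteristic [CompleteSpace E] {n : WithTop ℕ∞}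
    (hu : IsMonotoneOperator u₀) (hn : n ≠ 0) (hsmooth : ContDiff ℝ n u₀)
    (hY : ∀ t, 0 ≤ t → Function.RightInverse (Y t) (burgersCharacteristic u₀ t)) :
    ContDiffOn ℝ n (fun q : ℝ × E ↦ Y q.1 q.2) (Ioi 0 ×ˢ univ) := by
  rintro ⟨t, x⟩ ⟨ht : 0 < t, -⟩
  let f : (ℝ × E) × E → E := fun p ↦ burgersCharacteristic u₀ p.1.1 p.2 - p.1.2
  have hf : ContDiff ℝ n f := by unfold f burgersCharacteristic; fun_prop
  have hfderiv : fderiv ℝ f ((t, x), Y t x) ∘L .inr ℝ (ℝ × E) E =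
      fderiv ℝ (burgersCharacteristic u₀ t) (Y t x) := by
    have hslice := (hf.differentiable hn ((t, x), Y t x)).hasFDerivAt.comp (Y t x)
      (hasFDerivAt_prodMk_right (t, x) (Y t x))
    rw [← hslice.fderiv]
    exact fderiv_sub_const x
  have hnhds : Ici (0 : ℝ) ×ˢ univ ∈ 𝓝 (t, x) := prod_mem_nhds (Ici_mem_nhds ht) univ_mem
  have hroot : ∀ q ∈ Ici (0 : ℝ) ×ˢ univ, f (q, Y q.1 q.2) = 0 := fun q hq ↦
    sub_eq_zero.2 (hY q.1 hq.1 q.2)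
  refine (contDiffAt_of_eventually_apply_eq (f := f) hf.contDiffAt hn ?_
    ((hu.continuousOn_rightInverse_burgersCharacteristic hY).continuousAt hnhds)
    ?_).contDiffWithinAt
  · rw [hfderiv]
    exact hu.isInvertible_fderiv_burgersCharacteristic (hsmooth.differentiable hn _) ht.le
  · filter_upwards [hnhds] with q hq
    rw [hroot q hq, hroot (t, x) ⟨ht.le, mem_univ x⟩]

end IsMonotoneOperator

theorem burgers_characteristics_solution_general [CompleteSpace E] {n : WithTop ℕ∞} (hn : n ≠ 0)
    {u₀ : E → E} (hsmooth : ContDiff ℝ n u₀) (hu : IsMonotoneOperator u₀) {Y : ℝ → E → E}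
    (hY : ∀ t, 0 ≤ t → Function.RightInverse (Y t) (burgersCharacteristic u₀ t))
    {w : ℝ → E → E} (hw : ∀ t x, w t x = u₀ (Y t x)) :
    ContinuousOn (fun q : ℝ × E ↦ w q.1 q.2) (Ici 0 ×ˢ univ) ∧
    ContDiffOn ℝ n (fun q : ℝ × E ↦ w q.1 q.2) (Ioi 0 ×ˢ univ) ∧
    (∀ x, w 0 x = u₀ x) ∧
    (∀ t, 0 < t → ∀ x, deriv (fun s ↦ w s x) t + fderiv ℝ (w t) x (w t x) = 0) := by
  obtain rfl : w = fun t x ↦ u₀ (Y t x) := funext₂ hw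
  have hcontDiff : ContDiffOn ℝ n (fun q : ℝ × E ↦ u₀ (Y q.1 q.2)) (Ioi 0 ×ˢ univ) :=
    hsmooth.comp_contDiffOn (hu.contDiffOn_rightInverse_burgersCharacteristic hn hsmooth hY)
  refine ⟨hsmooth.continuous.comp_continuousOn
    (hu.continuousOn_rightInverse_burgersCharacteristic hY), hcontDiff, fun x ↦ ?_,
    fun t ht x ↦ ?_⟩
  · simpa [burgersCharacteristic] using congrArg u₀ (hY 0 le_rfl x)
  · have hdiff := (hcontDiff.differentiableOn hn).differentiableAt (x := (t, x))
      (prod_mem_nhds (Ioi_mem_nhds ht) univ_mem)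
    refine deriv_add_fderiv_apply_eq_zero_of_eventually_eq_const
      (w := fun t x ↦ u₀ (Y t x)) (c := u₀ (Y t x)) hdiff ?_
    filter_upwards [Ioi_mem_nhds ht] with s (hs : 0 < s)
    have hline : x + (s - t) • u₀ (Y t x) = burgersCharacteristic u₀ s (Y t x) := by
      nth_rw 1 [← hY t ht.le x]
      simp only [burgersCharacteristic, sub_smul]
      abel
    rw [hline, hu.leftInverse_burgersCharacteristic hs.le (hY s hs.le)]

end MonotoneOperator

/-- Method of characteristics for the non-viscous Burgers equation: with smooth increasing
initial data `w₀` having finite limits at `±∞`, `Y t` the inverse of the characteristic map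
`x₀ ↦ x₀ + t·w₀(x₀)` for `t ≥ 0`, and `w(t,x) := w₀(Y(t,x))`, the function `w` is continuous
on `[0,∞)×ℝ`, continuously differentiable on `(0,∞)×ℝ`, satisfies `w(0,·) = w₀`, and solves
`∂ₜw + w·∂ₓw = 0` for `t > 0`. -/
theorem burgers_characteristics_solution (w₀ : ℝ → ℝ) (hw : ContDiff ℝ (⊤ : ℕ∞) w₀)
    (hpos : ∀ x, 0 < deriv w₀ x) (wm wp : ℝ)
    (hminus : Tendsto w₀ atBot (nhds wm)) (hplus : Tendsto w₀ atTop (nhds wp))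
    (Y : ℝ → ℝ → ℝ) (hY : ∀ t : ℝ, 0 ≤ t → ∀ x, Y t x + t * w₀ (Y t x) = x)
    (w : ℝ → ℝ → ℝ) (hwdef : ∀ t x, w t x = w₀ (Y t x)) :
    ContinuousOn (fun q : ℝ × ℝ => w q.1 q.2) (Ici 0 ×ˢ univ) ∧
    ContDiffOn ℝ 1 (fun q : ℝ × ℝ => w q.1 q.2) (Ioi 0 ×ˢ univ) ∧
    (∀ x, w 0 x = w₀ x) ∧
    (∀ t : ℝ, 0 < t → ∀ x,
      deriv (fun s => w s x) t + w t x * deriv (fun y => w t y) x = 0) := by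
  simpa [fderiv_eq_smul_deriv] using burgers_characteristics_solution_general one_ne_zero
    (hw.of_le (mod_cast le_top)) (.of_monotone (strictMono_of_deriv_pos hpos).monotone) hY hwdef
end

section
/- Let w₀ : ℝ → ℝ be continuously differentiable with 0 < w₀'(x) ≤ K for all x (for a constant K > 0) and with finite limits w₋ := lim_{x→−∞} w₀(x), w₊ := lim_{x→+∞} w₀(x). For t ≥ 0 let Y(t,·) be the inverse of X_t(x₀) := x₀ + t·w₀(x₀) and let w(t,x) := w₀(Y(t,x)). Then for every real r ≥ 1 and every t ≥ 0, ∫_ℝ (∂ₓw(t,x))^r dx ≤ (w₊ − w₋) · ( K/(1 + K·t) )^{r−1}; in particular ‖∂ₓw(t)‖_{L^r} ≤ C_r (1+t)^{−1+1/r} with C_r depending only on K, w₊ − w₋ and r. -/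
open Filter MeasureTheory

/-!
Write `X_t(a) = a + t w₀(a)` for the characteristic map. If `u = w₀(a)` and `u' = w₀(a')` with
`a ≤ a'`, then `X_t(a') - X_t(a) = (a' - a) + t (u' - u)`, while `u' - u ≤ K (a' - a)`. Hence
`(1 + K t) (u' - u) ≤ K (X_t(a') - X_t(a))`: the solution at time `t` is monotone and Lipschitz with
constant `L = K / (1 + K t)`. It takes values in `[wm, wp]`, so its derivative `g` satisfies
`0 ≤ g ≤ L` and, by Lebesgue's theorem on monotone functions, `∫ g ≤ wp - wm`. It remains to
integrate `g ^ r ≤ g * L ^ (r - 1)`.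
-/

open scoped NNReal

section MonotoneDeriv

variable {f : ℝ → ℝ} {m M : ℝ}

lemma intervalIntegral_deriv_le_of_monotone_of_mem_Icc (hf : Monotone f)
    (hfmM : ∀ x, f x ∈ Set.Icc m M) {a b : ℝ} (hab : a ≤ b) :
    ∫ x in a..b, deriv f x ≤ M - m := by
  have hmem := (hf.monotoneOn (Set.uIcc a b)).intervalIntegral_deriv_mem_uIcc
  rw [Set.uIcc_of_le (sub_nonneg.2 (hf hab))] at hmem
  exact hmem.2.trans (sub_le_sub (hfmM b).2 (hfmM a).1)

lemma integrable_deriv_of_monotone_of_mem_Icc (hf : Monotone f)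
    (hfmM : ∀ x, f x ∈ Set.Icc m M) : Integrable (deriv f) := by
  refine integrable_of_intervalIntegral_norm_bounded (l := atTop) (a := Neg.neg) (b := id) (M - m)
    (fun R ↦ ?_) tendsto_neg_atTop_atBot tendsto_id ?_
  · exact (hf.monotoneOn _).intervalIntegrable_deriv.1
  · filter_upwards [eventually_ge_atTop (0 : ℝ)] with R hR
    simp only [Real.norm_of_nonneg hf.deriv_nonneg]
    exact intervalIntegral_deriv_le_of_monotone_of_mem_Icc hf hfmM (neg_le_self hR)

lemma integral_deriv_le_of_monotone_of_mem_Icc (hf : Monotone f)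
    (hfmM : ∀ x, f x ∈ Set.Icc m M) : ∫ x, deriv f x ≤ M - m := by
  refine le_of_tendsto (intervalIntegral_tendsto_integral
    (integrable_deriv_of_monotone_of_mem_Icc hf hfmM) tendsto_neg_atTop_atBot tendsto_id) ?_
  filter_upwards [eventually_ge_atTop (0 : ℝ)] with R hR
  exact intervalIntegral_deriv_le_of_monotone_of_mem_Icc hf hfmM (neg_le_self hR)

end MonotoneDeriv

lemma integral_rpow_le_integral_mul_rpow {α : Type*} [MeasurableSpace α] {μ : Measure α}
    {g : α → ℝ} {L r : ℝ} (hg : Integrable g μ) (hg_nonneg : 0 ≤ᵐ[μ] g)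
    (hg_le : ∀ᵐ x ∂μ, g x ≤ L) (hr : 1 ≤ r) :
    ∫ x, g x ^ r ∂μ ≤ (∫ x, g x ∂μ) * L ^ (r - 1) := by
  rw [← integral_mul_const]
  refine integral_mono_of_nonneg ?_ (hg.mul_const _) ?_
  · filter_upwards [hg_nonneg] with x hx using Real.rpow_nonneg hx r
  · filter_upwards [hg_nonneg, hg_le] with x hx hxL
    calc g x ^ r = g x * g x ^ (r - 1) := by
          rw [← Real.rpow_one_add' hx (by linarith), add_sub_cancel]
      _ ≤ g x * L ^ (r - 1) :=
          mul_le_mul_of_nonneg_left (Real.rpow_le_rpow hx hxL (sub_nonneg.2 hr)) hx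

section Characteristic

/-- The characteristic map `X_t` of the Burgers equation with initial data `w₀`: the position at
time `t` of the characteristic issued from `a`. The solution at time `t` is `w₀ ∘ y` for a right
inverse `y` of `X_t`. -/
def characteristic (w₀ : ℝ → ℝ) (t a : ℝ) : ℝ := a + t * w₀ a

variable {w₀ y : ℝ → ℝ} {t : ℝ} {K : ℝ≥0}

lemma strictMono_characteristic (hw : Monotone w₀) (ht : 0 ≤ t) :
    StrictMono (characteristic w₀ t) :=
  strictMono_id.add_monotone (hw.const_mul ht)

lemma monotone_of_rightInverse_characteristic (hw : Monotone w₀) (ht : 0 ≤ t)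
    (hy : Function.RightInverse y (characteristic w₀ t)) : Monotone y := fun x x' hx ↦ by
  rwa [← (strictMono_characteristic hw ht).le_iff_le, hy x, hy x']

lemma one_add_mul_abs_sub_le_abs_characteristic_sub (hw : Monotone w₀) (hK : LipschitzWith K w₀)
    (ht : 0 ≤ t) (a a' : ℝ) :
    (1 + K * t) * |w₀ a - w₀ a'| ≤ K * |characteristic w₀ t a - characteristic w₀ t a'| := by
  wlog ha : a' ≤ a generalizing a a'
  · rw [abs_sub_comm (w₀ a), abs_sub_comm (characteristic w₀ t a)]
    exact this a' a (le_of_not_ge ha)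
  have hlip : w₀ a - w₀ a' ≤ K * (a - a') := by
    simpa only [Real.dist_eq, abs_of_nonneg (sub_nonneg.2 ha),
      abs_of_nonneg (sub_nonneg.2 (hw ha))] using hK.dist_le_mul a a'
  rw [abs_of_nonneg (sub_nonneg.2 (hw ha)),
    abs_of_nonneg (sub_nonneg.2 ((strictMono_characteristic hw ht).monotone ha))]
  unfold characteristic
  linarith

lemma deriv_comp_rightInverse_characteristic_le (hw : Monotone w₀) (hK : LipschitzWith K w₀)
    (ht : 0 ≤ t) (hy : Function.RightInverse y (characteristic w₀ t)) (x : ℝ) :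
    deriv (w₀ ∘ y) x ≤ K / (1 + K * t) := by
  refine (Real.le_norm_self _).trans
    (norm_deriv_le_of_lip' (by positivity) (Eventually.of_forall fun x' ↦ ?_))
  have hslope := one_add_mul_abs_sub_le_abs_characteristic_sub hw hK ht (y x') (y x)
  rw [hy x', hy x] at hslope
  rwa [Real.norm_eq_abs, Real.norm_eq_abs, div_mul_eq_mul_div, le_div_iff₀' (by positivity)]

lemma integral_deriv_comp_rightInverse_characteristic_rpow_le (hw : Monotone w₀)
    (hK : LipschitzWith K w₀) {wm wp : ℝ} (hrange : ∀ a, w₀ a ∈ Set.Icc wm wp) (ht : 0 ≤ t)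
    (hy : Function.RightInverse y (characteristic w₀ t)) {r : ℝ} (hr : 1 ≤ r) :
    ∫ x, deriv (w₀ ∘ y) x ^ r ≤ (wp - wm) * (K / (1 + K * t)) ^ (r - 1) := by
  have hmono : Monotone (w₀ ∘ y) := hw.comp (monotone_of_rightInverse_characteristic hw ht hy)
  have hmem : ∀ x, (w₀ ∘ y) x ∈ Set.Icc wm wp := fun x ↦ hrange (y x)
  calc ∫ x, deriv (w₀ ∘ y) x ^ r
      ≤ (∫ x, deriv (w₀ ∘ y) x) * (K / (1 + K * t)) ^ (r - 1) :=
        integral_rpow_le_integral_mul_rpow (integrable_deriv_of_monotone_of_mem_Icc hmono hmem)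
          (Eventually.of_forall fun _ ↦ hmono.deriv_nonneg)
          (Eventually.of_forall (deriv_comp_rightInverse_characteristic_le hw hK ht hy)) hr
    _ ≤ (wp - wm) * (K / (1 + K * t)) ^ (r - 1) :=
        mul_le_mul_of_nonneg_right (integral_deriv_le_of_monotone_of_mem_Icc hmono hmem)
          (by positivity)

end Characteristic

section TimeDecay

variable {K t : ℝ}

lemma div_one_add_mul_le_max_div_one_add (hK : 0 ≤ K) (ht : 0 ≤ t) :
    K / (1 + K * t) ≤ max K 1 / (1 + t) := by
  rw [div_le_div_iff₀ (by positivity) (by positivity)]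
  have hKt : K * t ≤ max K 1 * (K * t) :=
    le_mul_of_one_le_left (mul_nonneg hK ht) (le_max_right K 1)
  linarith [le_max_left K 1]

lemma rpow_one_div_le_mul_one_add_rpow {I D r : ℝ} (hK : 0 ≤ K) (ht : 0 ≤ t) (hI : 0 ≤ I)
    (hD : 0 ≤ D) (hr : 1 ≤ r) (hID : I ≤ D * (K / (1 + K * t)) ^ (r - 1)) :
    I ^ (1 / r) ≤ D ^ (1 / r) * max K 1 ^ (1 - 1 / r) * (1 + t) ^ (-1 + 1 / r) := by
  have hr_pos : 0 < r := zero_lt_one.trans_le hr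
  have hL : 0 ≤ K / (1 + K * t) := by positivity
  have hexp : (r - 1) * (1 / r) = 1 - 1 / r := by
    rw [sub_mul, mul_one_div_cancel hr_pos.ne', one_mul]
  have hexp_nonneg : 0 ≤ 1 - 1 / r := hexp ▸ mul_nonneg (sub_nonneg.2 hr) (by positivity)
  calc I ^ (1 / r)
      ≤ (D * (K / (1 + K * t)) ^ (r - 1)) ^ (1 / r) := by gcongr
    _ = D ^ (1 / r) * (K / (1 + K * t)) ^ (1 - 1 / r) := by
        rw [Real.mul_rpow hD (by positivity), ← Real.rpow_mul hL, hexp]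
    _ ≤ D ^ (1 / r) * (max K 1 / (1 + t)) ^ (1 - 1 / r) := by
        have hdecay := div_one_add_mul_le_max_div_one_add hK ht
        gcongr (D ^ (1 / r) * ?_ ^ (1 - 1 / r))
    _ = D ^ (1 / r) * max K 1 ^ (1 - 1 / r) * (1 + t) ^ (-1 + 1 / r) := by
        have hneg : -1 + 1 / r = -(1 - 1 / r) := by ring
        rw [hneg, Real.rpow_neg (by positivity), ← div_eq_mul_inv,
          Real.div_rpow (by positivity) (by positivity), mul_div_assoc]

end TimeDecay

theorem burgers_derivative_decay_Lr_general (K : ℝ≥0) (w₀ : ℝ → ℝ)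
    (hmono : Monotone w₀) (hlip : LipschitzWith K w₀)
    (wm wp : ℝ) (hrange : ∀ a, w₀ a ∈ Set.Icc wm wp)
    (Y : ℝ → ℝ → ℝ) (hY : ∀ t : ℝ, 0 ≤ t → ∀ x, Y t x + t * w₀ (Y t x) = x)
    (w : ℝ → ℝ → ℝ) (hwdef : ∀ t x, w t x = w₀ (Y t x)) :
    (∀ r : ℝ, 1 ≤ r → ∀ t : ℝ, 0 ≤ t →
      (∫ x, (deriv (fun y => w t y) x) ^ r) ≤ (wp - wm) * (K / (1 + K * t)) ^ (r - 1)) ∧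
    (∀ r : ℝ, 1 ≤ r → ∃ C : ℝ, 0 < C ∧ ∀ t : ℝ, 0 ≤ t →
      (∫ x, (deriv (fun y => w t y) x) ^ r) ^ (1 / r) ≤ C * (1 + t) ^ (-1 + 1 / r)) := by
  have hw : ∀ t, (fun y ↦ w t y) = w₀ ∘ Y t := fun t ↦ funext (hwdef t)
  simp only [hw]
  have hbound : ∀ r : ℝ, 1 ≤ r → ∀ t : ℝ, 0 ≤ t →
      ∫ x, deriv (w₀ ∘ Y t) x ^ r ≤ (wp - wm) * (K / (1 + K * t)) ^ (r - 1) := fun r hr t ht ↦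
    integral_deriv_comp_rightInverse_characteristic_rpow_le hmono hlip hrange ht (hY t ht) hr
  refine ⟨hbound, fun r hr ↦ ?_⟩
  have hD : 0 ≤ wp - wm := sub_nonneg.2 ((hrange 0).1.trans (hrange 0).2)
  refine ⟨(wp - wm) ^ (1 / r) * max (K : ℝ) 1 ^ (1 - 1 / r) + 1, by positivity, fun t ht ↦ ?_⟩
  have hnonneg : 0 ≤ ∫ x, deriv (w₀ ∘ Y t) x ^ r := integral_nonneg fun x ↦ Real.rpow_nonneg
    (hmono.comp (monotone_of_rightInverse_characteristic hmono ht (hY t ht))).deriv_nonneg r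
  refine (rpow_one_div_le_mul_one_add_rpow K.2 ht hnonneg hD hr (hbound r hr t ht)).trans ?_
  exact mul_le_mul_of_nonneg_right (le_add_of_nonneg_right zero_le_one) (by positivity)

/-- L^r decay of the derivative (Lemma 2.1(2)): if `0 < w₀' ≤ K` and `w₀ → wm, wp` at
`∓∞`, then the Burgers solution `w(t,x) = w₀(Y(t,x))` satisfies, for every `r ≥ 1` and
`t ≥ 0`, `∫ (∂ₓw(t,x))^r dx ≤ (wp - wm)·(K/(1+Kt))^(r-1)`; in particular
`‖∂ₓw(t)‖_{L^r} ≤ C_r (1+t)^(-1+1/r)`. -/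
theorem burgers_derivative_decay_Lr (K : ℝ) (hK : 0 < K)
    (w₀ : ℝ → ℝ) (hw : ContDiff ℝ 1 w₀)
    (hpos : ∀ x, 0 < deriv w₀ x) (hbd : ∀ x, deriv w₀ x ≤ K)
    (wm wp : ℝ)
    (hminus : Tendsto w₀ atBot (nhds wm)) (hplus : Tendsto w₀ atTop (nhds wp))
    (Y : ℝ → ℝ → ℝ) (hY : ∀ t : ℝ, 0 ≤ t → ∀ x, Y t x + t * w₀ (Y t x) = x)
    (w : ℝ → ℝ → ℝ) (hwdef : ∀ t x, w t x = w₀ (Y t x)) :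
    (∀ r : ℝ, 1 ≤ r → ∀ t : ℝ, 0 ≤ t →
      (∫ x, (deriv (fun y => w t y) x) ^ r) ≤ (wp - wm) * (K / (1 + K * t)) ^ (r - 1)) ∧
    (∀ r : ℝ, 1 ≤ r → ∃ C : ℝ, 0 < C ∧ ∀ t : ℝ, 0 ≤ t →
      (∫ x, (deriv (fun y => w t y) x) ^ r) ^ (1 / r) ≤ C * (1 + t) ^ (-1 + 1 / r)) := by
  have hdiff : Differentiable ℝ w₀ := hw.differentiable one_ne_zero
  have hmono : Monotone w₀ := monotone_of_deriv_nonneg hdiff fun x ↦ (hpos x).le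
  have hlip : LipschitzWith ⟨K, hK.le⟩ w₀ := lipschitzWith_of_nnnorm_deriv_le hdiff fun x ↦
    (Real.norm_of_nonneg (hpos x).le).trans_le (hbd x)
  exact burgers_derivative_decay_Lr_general ⟨K, hK.le⟩ w₀ hmono hlip wm wp
    (fun a ↦ ⟨hmono.le_of_tendsto hminus a, hmono.ge_of_tendsto hplus a⟩) Y hY w hwdef
end
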